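/- For every 0 < ε < 1 there exist C, δ > 0 such that, for p ≥ C log n / n, the binomial random graph G = G_{n,p} asymptotically almost surely satisfies the following: for every H ∈ H^ε_{n,p}(G), the graph G ∖ H complements every graph R ⊆ G that satisfies property RE(1/2 + ε/4) and has at most δn²p edges. -/

import Mathlib

/-!
The proof is a first-moment argument over pairs (small graph `R`, path `P`).

Suppose the conclusion fails for `G` at `H`, `R` and `P`. Property `RE(1/2 + ε/4)` supplies sets
`S` and `T v` which depend on `R` and `P` only, and every edge `vw` of `G` with `v ∈ S`,
`w ∈ T v` lies in `H` and not in `R`. Fewer than `n / 2` vertices have `H`-degree above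
`(n / 2 + 1 - εn) p`, so `S` contains a set `A` of `m ≈ εn / 16` vertices of smaller `H`-degree
(`exists_low_degree`). Consider the pairs `vw` with `v ∈ A` and `w ∈ T v ∖ A`. They avoid `R`, there
are at least `m (1/2 + ε/8) n` of them (`card_pairs`), and `G` contains at most
`m (n / 2 + 1 - εn) p` of them (`card_inter_pairs`), well below the expectation.

For fixed `R`, `P`, `A` the events `R ⊆ G` and that few of these pairs are edges are independent, so a
Chernoff bound gives probability at most `p ^ |R| · exp (-(ε³ / 32) n² p)` (`sum_exp`,
`chernoff_exponent`). There are at most `exp (3 n log n)` choices of `(P, A)` (`card_index_le`), and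
`n log n` is a small multiple of `n² p` when `C` is large. With `y = ε³ / 256` and `δ = y²`, the sum
of `p ^ |R|` over graphs with at most `δ n² p` edges is at most
`(1 + y p) ^ (n choose 2) · y ^ (-δ n² p) ≤ exp (2 y n² p)`. Multiplying the three
factors (`union_bound`) leaves a failure probability of at most `exp (-n)`.
-/


open Filter Real

namespace Resilience

variable {V : Type*}

/-- The degree of a vertex, as the cardinality of its neighbourhood. -/
noncomputable def deg (G : SimpleGraph V) (v : V) : ℕ := (G.neighborSet v).ncard

/-- The neighbourhood of a set of vertices: all vertices with a neighbour in `X`. -/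
def nbhd (G : SimpleGraph V) (X : Set V) : Set V := {v | ∃ x ∈ X, G.Adj v x}

/-- The minimum degree over a set of vertices. -/
noncomputable def minDeg (G : SimpleGraph V) (X : Set V) : ℕ :=
  sInf ((fun v => deg G v) '' X)

/-- The number of edges of `G` with one endpoint in `X` and the other in `Y`. -/
noncomputable def eBetween (G : SimpleGraph V) (X Y : Set V) : ℕ :=
  {e ∈ G.edgeSet | ∃ x ∈ X, ∃ y ∈ Y, e = s(x, y)}.ncard

/-- The number of edges of `G` with both endpoints in `A`. -/
noncomputable def eIn (G : SimpleGraph V) (A : Set V) : ℕ :=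
  {e ∈ G.edgeSet | ∀ v ∈ e, v ∈ A}.ncard

/-- The graph on `V` whose edges are the consecutive pairs of the list `l`;
this lets us view a path, recorded as a list of distinct vertices, as a graph. -/
def listGraph (l : List V) : SimpleGraph V :=
  SimpleGraph.fromEdgeSet {e | ∃ q ∈ l.zip l.tail, e = s(q.1, q.2)}

/-- `l` is a (nonempty) path on `V` all of whose edges lie in `G`. -/
def IsPathOn (G : SimpleGraph V) (l : List V) : Prop :=
  l ≠ [] ∧ l.Nodup ∧ l.Chain' G.Adj

/-- `l` is a longest path with all edges in `G`. -/
def IsLongestPathOn (G : SimpleGraph V) (l : List V) : Prop :=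
  IsPathOn G l ∧ ∀ l' : List V, IsPathOn G l' → l'.length ≤ l.length

/-- `l'` is obtained from the path `l` (with fixed last endpoint) by a single rotation
within `G`, whose broken edge lies on the original path `P`.  Writing
`l = a :: t₁ ++ c :: b :: t₂`, the pivot is `b`, the new edge is `ab ∈ G`, the broken
edge is `cb` (an edge of `P`), and the rotated path is `(a :: t₁ ++ [c]).reverse ++ b :: t₂`. -/
def IsRotation (G : SimpleGraph V) (P l l' : List V) : Prop :=
  ∃ (a c b : V) (t₁ t₂ : List V),
    l = a :: t₁ ++ c :: b :: t₂ ∧ G.Adj a b ∧ (listGraph P).Adj c b ∧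
    l' = (a :: t₁ ++ [c]).reverse ++ b :: t₂

/-- The set of paths obtainable from `P` by at most `t` successive rotations within `G`
with fixed last endpoint, all broken edges lying on `P`. -/
def rotSet (G : SimpleGraph V) (P : List V) : ℕ → Set (List V)
  | 0 => {P}
  | t + 1 => rotSet G P t ∪ {l' | ∃ l ∈ rotSet G P t, IsRotation G P l l'}

/-- `R^t_{G,P,u}`: the set of endpoints of paths obtainable from `P` by at most `t`
successive rotations within `G` with fixed last endpoint. -/
def Rset (G : SimpleGraph V) (P : List V) (t : ℕ) : Set V :=
  {x | ∃ l ∈ rotSet G P t, l.head? = some x}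

/-- The family `H^ε_{n,p}` of Pósa-type subgraphs: there is an ordering of the vertices
with non-increasing degrees such that `d_H(v_i) ≤ (n-i)p - εnp` for all `i < n/2`
(1-based indexing). -/
def PosaFamily (n : ℕ) (p ε : ℝ) (H : SimpleGraph (Fin n)) : Prop :=
  ∃ v : Fin n → Fin n, Function.Bijective v ∧
    (∀ i j : Fin n, i ≤ j → deg H (v j) ≤ deg H (v i)) ∧
    ∀ i : Fin n, ((i.1 : ℝ) + 1) < n / 2 →
      (deg H (v i) : ℝ) ≤ ((n : ℝ) - ((i.1 : ℝ) + 1)) * p - ε * n * p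

/-- The family `H^{ε,δ}_{n,p}` of (shifted) Chvátal-type subgraphs, where the shift
`δn` is recorded as a natural number `s`: there is an ordering of the vertices with
non-increasing degrees such that for all `i < n/2` (1-based indexing), either
`d_H(v_i) ≤ (n-i)p - εnp` or `d_H(v_{n-i-s}) ≤ ip - εnp`. -/
def ChvatalFamily (n : ℕ) (p ε : ℝ) (s : ℕ) (H : SimpleGraph (Fin n)) : Prop :=
  ∃ v : Fin n → Fin n, Function.Bijective v ∧
    (∀ i j : Fin n, i ≤ j → deg H (v j) ≤ deg H (v i)) ∧
    ∀ i : Fin n, ((i.1 : ℝ) + 1) < n / 2 →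
      ((deg H (v i) : ℝ) ≤ ((n : ℝ) - ((i.1 : ℝ) + 1)) * p - ε * n * p ∨
       (deg H (v ⟨n - (i.1 + 1) - s - 1, by have := i.2; omega⟩) : ℝ) ≤
         ((i.1 : ℝ) + 1) * p - ε * n * p)

/-- The probability weight of a fixed graph `G` in the binomial random graph `G_{n,p}`. -/
noncomputable def weight (n : ℕ) (p : ℝ) (G : SimpleGraph (Fin n)) : ℝ :=
  p ^ G.edgeSet.ncard * (1 - p) ^ (n.choose 2 - G.edgeSet.ncard)

open Classical in
/-- The probability that the binomial random graph `G_{n,p}` satisfies the property `Q`. -/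
noncomputable def Pr (n : ℕ) (p : ℝ) (Q : SimpleGraph (Fin n) → Prop) : ℝ :=
  ∑ G : SimpleGraph (Fin n), if Q G then weight n p G else 0

/-- Property `RE(δ)` for a (connected) graph `G` on `n` vertices: for every path `P`
on the vertex set, either `G ∪ P` has a longer path, or there are at least `δn` vertices
`v`, each with a set `T v` of at least `δn` vertices `w`, such that `G ∪ P` has a path
from `v` to `w` with the same vertex set as `P`. -/
def RE (n : ℕ) (δ : ℝ) (G : SimpleGraph (Fin n)) : Prop :=
  G.Connected ∧
  ∀ P : List (Fin n), P ≠ [] → P.Nodup →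
    (∃ Q : List (Fin n), IsPathOn (G ⊔ listGraph P) Q ∧ P.length < Q.length) ∨
    (∃ S : Set (Fin n), δ * n ≤ S.ncard ∧
      ∃ T : Fin n → Set (Fin n), (∀ v ∈ S, δ * n ≤ (T v).ncard) ∧
        ∀ v ∈ S, ∀ w ∈ T v, ∃ Q : List (Fin n),
          IsPathOn (G ⊔ listGraph P) Q ∧ Q.head? = some v ∧ Q.getLast? = some w ∧
          Q.toFinset = P.toFinset)

/-- `G₂` complements `G₁` (with respect to parameter `δ` as in `RE(δ)`): for every path
`P` on the vertex set, either `G₁ ∪ P` has a longer path, or there are sets `S`, `T v`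
as in the definition of `RE(δ)` together with `v ∈ S` and `w ∈ T v` such that `vw` is an
edge of `G₁ ∪ G₂`. -/
def Complements (n : ℕ) (δ : ℝ) (G₁ G₂ : SimpleGraph (Fin n)) : Prop :=
  ∀ P : List (Fin n), P ≠ [] → P.Nodup →
    (∃ Q : List (Fin n), IsPathOn (G₁ ⊔ listGraph P) Q ∧ P.length < Q.length) ∨
    (∃ S : Set (Fin n), δ * n ≤ S.ncard ∧
      ∃ T : Fin n → Set (Fin n), (∀ v ∈ S, δ * n ≤ (T v).ncard) ∧
        (∀ v ∈ S, ∀ w ∈ T v, ∃ Q : List (Fin n),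
          IsPathOn (G₁ ⊔ listGraph P) Q ∧ Q.head? = some v ∧ Q.getLast? = some w ∧
          Q.toFinset = P.toFinset) ∧
        ∃ v ∈ S, ∃ w ∈ T v, (G₁ ⊔ G₂).Adj v w)

/-! ### Sums over all graphs -/

section
open Classical

/-- The edges of `G` as a finite set of unordered pairs. -/
noncomputable def eF {n : ℕ} (G : SimpleGraph (Fin n)) : Finset (Sym2 (Fin n)) :=
  Finset.univ.filter (· ∈ G.edgeSet)

/-- All non-degenerate unordered pairs, i.e. the edges of the complete graph. -/
noncomputable def allE (n : ℕ) : Finset (Sym2 (Fin n)) :=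
  Finset.univ.filter (fun e => ¬ e.IsDiag)

lemma mem_eF {n : ℕ} {G : SimpleGraph (Fin n)} {e : Sym2 (Fin n)} :
    e ∈ eF G ↔ e ∈ G.edgeSet := by simp [eF]

lemma eF_subset {n : ℕ} (G : SimpleGraph (Fin n)) : eF G ⊆ allE n := by
  intro e he
  simp only [allE, Finset.mem_filter, Finset.mem_univ, true_and]
  exact G.not_isDiag_of_mem_edgeSet (mem_eF.1 he)

lemma ncard_edgeSet {n : ℕ} (G : SimpleGraph (Fin n)) : G.edgeSet.ncard = (eF G).card := by
  rw [← Set.ncard_coe_finset]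
  congr 1
  ext e
  simp [eF]

lemma card_allE (n : ℕ) : (allE n).card = n.choose 2 := by
  have := Sym2.card_subtype_not_diag (α := Fin n)
  rw [Fintype.card_subtype, Fintype.card_fin] at this
  exact this

/-- Graphs on `Fin n` correspond to subsets of `allE n`, so a sum over graphs of a product of
edge and non-edge factors is a product over all pairs. -/
lemma sum_graph (n : ℕ) (f g : Sym2 (Fin n) → ℝ) :
    ∑ G : SimpleGraph (Fin n), (∏ e ∈ eF G, f e) * ∏ e ∈ allE n \ eF G, g e
      = ∏ e ∈ allE n, (f e + g e) := by
  rw [Finset.prod_add]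
  refine Finset.sum_bij (fun G _ => eF G) ?_ ?_ ?_ ?_
  · intro G _
    exact Finset.mem_powerset.2 (eF_subset G)
  · intro G _ G' _ h
    apply SimpleGraph.edgeSet_injective
    ext e
    rw [← mem_eF, ← mem_eF]
    exact h ▸ Iff.rfl
  · intro s hs
    rw [Finset.mem_powerset] at hs
    refine ⟨SimpleGraph.fromEdgeSet (s : Set (Sym2 (Fin n))), Finset.mem_univ _, ?_⟩
    ext e
    rw [mem_eF, SimpleGraph.edgeSet_fromEdgeSet]
    constructor
    · intro h
      exact h.1
    · intro h
      have := hs h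
      simp only [allE, Finset.mem_filter, Finset.mem_univ, true_and] at this
      exact ⟨h, this⟩
  · intro G _
    rfl

lemma weight_eq (n : ℕ) (p : ℝ) (G : SimpleGraph (Fin n)) :
    weight n p G = (∏ _e ∈ eF G, p) * ∏ _e ∈ allE n \ eF G, (1 - p) := by
  rw [weight, Finset.prod_const, Finset.prod_const, Finset.card_sdiff_of_subset (eF_subset G),
    card_allE, ncard_edgeSet]

lemma weight_nonneg (n : ℕ) (p : ℝ) (h0 : 0 ≤ p) (h1 : p ≤ 1) (G : SimpleGraph (Fin n)) :
    0 ≤ weight n p G :=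
  mul_nonneg (pow_nonneg h0 _) (pow_nonneg (by linarith) _)

lemma sum_weight (n : ℕ) (p : ℝ) : ∑ G : SimpleGraph (Fin n), weight n p G = 1 := by
  simp_rw [weight_eq]
  rw [sum_graph n (fun _ => p) (fun _ => 1 - p)]
  simp

/-- The joint Laplace transform: the event `R ⊆ G` and the number of edges of `G` in a set `D`
of pairs disjoint from `R` are independent. -/
lemma sum_exp (n : ℕ) (p q : ℝ) (R : SimpleGraph (Fin n)) (D : Finset (Sym2 (Fin n)))
    (hD : D ⊆ allE n \ eF R) :
    ∑ G : SimpleGraph (Fin n), (if R ≤ G then weight n p G * q ^ (eF G ∩ D).card else 0)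
      = p ^ (eF R).card * (1 - p + p * q) ^ D.card := by
  have key : ∀ G : SimpleGraph (Fin n),
      (if R ≤ G then weight n p G * q ^ (eF G ∩ D).card else 0)
      = (∏ e ∈ eF G, (p * if e ∈ D then q else 1)) *
        ∏ e ∈ allE n \ eF G, (if e ∈ eF R then 0 else 1 - p) := by
    intro G
    split_ifs with h
    · rw [weight_eq, Finset.prod_mul_distrib, Finset.prod_ite_mem, Finset.prod_const q]
      have : ∏ e ∈ allE n \ eF G, (if e ∈ eF R then 0 else 1 - p)
          = ∏ e ∈ allE n \ eF G, (1 - p) := by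
        refine Finset.prod_congr rfl fun e he => ?_
        rw [if_neg]
        intro he'
        exact (Finset.mem_sdiff.1 he).2
          (mem_eF.2 (SimpleGraph.edgeSet_mono h (mem_eF.1 he')))
      rw [this]
      ring
    · symm
      apply mul_eq_zero_of_right
      rw [← SimpleGraph.edgeSet_subset_edgeSet, Set.not_subset] at h
      obtain ⟨e, he, he'⟩ := h
      have heR : e ∈ eF R := mem_eF.2 he
      refine Finset.prod_eq_zero (i := e) ?_ (by rw [if_pos heR])
      exact Finset.mem_sdiff.2 ⟨eF_subset R heR, fun h => he' (mem_eF.1 h)⟩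
  simp_rw [key]
  rw [sum_graph]
  have h1 : ∀ e ∈ allE n, ((p * if e ∈ D then q else 1) + (if e ∈ eF R then 0 else 1 - p))
      = (if e ∈ eF R then p else 1) * (if e ∈ D then (1 - p + p * q) else 1) := by
    intro e _
    by_cases hR : e ∈ eF R
    · have : e ∉ D := fun h => (Finset.mem_sdiff.1 (hD h)).2 hR
      simp [hR, this]
    · by_cases h2 : e ∈ D <;> simp [hR, h2]
      ring
  rw [Finset.prod_congr rfl h1, Finset.prod_mul_distrib, Finset.prod_ite_mem,
    Finset.prod_ite_mem, Finset.prod_const, Finset.prod_const,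
    Finset.inter_eq_right.2 (eF_subset R),
    Finset.inter_eq_right.2 (hD.trans Finset.sdiff_subset)]

lemma sum_pow (n : ℕ) (x : ℝ) :
    ∑ R : SimpleGraph (Fin n), x ^ (eF R).card = (x + 1) ^ n.choose 2 := by
  have := sum_graph n (fun _ => x) (fun _ => 1)
  simp only [Finset.prod_const_one, mul_one, Finset.prod_const] at this
  rw [this, card_allE]

/-! ### The union bound -/

/-- Suppose every graph failing `Q` contains a subgraph `R` with at most `K` edges and, for some
index `i`, at most `a` edges in a set `D R i` of at least `d` pairs avoiding `R`. The failure
probability is then at most a Chernoff bound (with parameter `lam`) summed over `i` and `R`;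
the factor `y ^ (|R| - K) ≥ 1` turns the sum over the small `R` into a full binomial sum. -/
lemma union_bound {ι : Type*} [Fintype ι] (n : ℕ) (p y lam a d K : ℝ)
    (h0 : 0 ≤ p) (h1 : p ≤ 1) (hy : 0 < y) (hy1 : y ≤ 1) (hlam : 0 ≤ lam)
    (Q : SimpleGraph (Fin n) → Prop)
    (D : SimpleGraph (Fin n) → ι → Finset (Sym2 (Fin n)))
    (hQ : ∀ G, ¬ Q G → ∃ R, R ≤ G ∧ ((eF R).card : ℝ) ≤ K ∧ ∃ i, D R i ⊆ allE n \ eF R ∧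
      d ≤ (D R i).card ∧ ((eF G ∩ D R i).card : ℝ) ≤ a) :
    1 - Fintype.card ι * (exp (y * p * n.choose 2) * exp (K * log y⁻¹) *
      (exp (lam * a) * exp (- (d * p * (1 - exp (-lam)))))) ≤ Pr n p Q := by
  set B : ℝ := exp (K * log y⁻¹) * exp (lam * a) with hB
  have hq1 : exp (-lam) ≤ 1 := by
    rw [Real.exp_le_one_iff]; linarith
  have hq0 : 0 < exp (-lam) := exp_pos _
  -- the Markov weight of the pair `(R, i)` at `G`
  let F : SimpleGraph (Fin n) → SimpleGraph (Fin n) → ι → ℝ := fun G R i =>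
    if D R i ⊆ allE n \ eF R ∧ d ≤ (D R i).card then
      B * y ^ (eF R).card *
        (if R ≤ G then weight n p G * exp (-lam) ^ (eF G ∩ D R i).card else 0)
    else 0
  have hF0 : ∀ G R i, 0 ≤ F G R i := by
    intro G R i
    have := weight_nonneg n p h0 h1 G
    simp only [F]
    split_ifs <;> positivity
  have hbad : ∀ G, weight n p G ≤ (if Q G then weight n p G else 0) + ∑ R, ∑ i, F G R i := by
    intro G
    have hw := weight_nonneg n p h0 h1 G
    split_ifs with h
    · have : 0 ≤ ∑ R, ∑ i, F G R i :=
        Finset.sum_nonneg fun R _ => Finset.sum_nonneg fun i _ => hF0 G R i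
      linarith
    · obtain ⟨R, hRG, hRK, i, hD, hd, hX⟩ := hQ G h
      have e1 : F G R i ≤ ∑ i, F G R i :=
        Finset.single_le_sum (fun i _ => hF0 G R i) (Finset.mem_univ i)
      have e2 : ∑ i, F G R i ≤ ∑ R, ∑ i, F G R i :=
        Finset.single_le_sum (f := fun R => ∑ i, F G R i)
          (fun R _ => Finset.sum_nonneg fun i _ => hF0 G R i) (Finset.mem_univ R)
      have e3 : weight n p G ≤ F G R i := by
        simp only [F]
        rw [if_pos ⟨hD, hd⟩, if_pos hRG]
        have hy' : y ^ (eF R).card = exp (- ((eF R).card * log y⁻¹)) := by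
          rw [Real.log_inv, mul_neg, neg_neg, Real.exp_nat_mul, Real.exp_log hy]
        have hlog : 0 ≤ log y⁻¹ := Real.log_nonneg ((one_le_inv₀ hy).2 hy1)
        have : 1 ≤ B * y ^ (eF R).card * exp (-lam) ^ (eF G ∩ D R i).card := by
          rw [hB, hy', ← Real.exp_nat_mul, ← Real.exp_add, ← Real.exp_add, ← Real.exp_add]
          apply Real.one_le_exp
          nlinarith [mul_le_mul_of_nonneg_right hRK hlog, mul_le_mul_of_nonneg_right hX hlam]
        nlinarith [mul_le_mul_of_nonneg_right this hw]
      linarith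
  have hsum : (1 : ℝ) ≤ Pr n p Q + ∑ R, ∑ i, ∑ G, F G R i := by
    calc (1 : ℝ) = ∑ G, weight n p G := (sum_weight n p).symm
      _ ≤ ∑ G, ((if Q G then weight n p G else 0) + ∑ R, ∑ i, F G R i) :=
        Finset.sum_le_sum fun G _ => hbad G
      _ = _ := by
        rw [Finset.sum_add_distrib]
        congr 1
        · rw [Finset.sum_comm]
          exact Finset.sum_congr rfl fun R _ => Finset.sum_comm
  have hFG : ∀ R i, ∑ G, F G R i
      ≤ B * (y * p) ^ (eF R).card * exp (- (d * p * (1 - exp (-lam)))) := by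
    intro R i
    simp only [F]
    split_ifs with h
    · rw [← Finset.mul_sum, sum_exp n p _ R _ h.1, mul_pow]
      have hb : (1 - p + p * exp (-lam)) ^ (D R i).card
          ≤ exp (- (d * p * (1 - exp (-lam)))) := by
        have h2 : 1 - p + p * exp (-lam) ≤ exp (-(p * (1 - exp (-lam)))) := by
          have := Real.add_one_le_exp (-(p * (1 - exp (-lam))))
          linarith
        have h3 : 0 ≤ 1 - p + p * exp (-lam) := by
          have := mul_nonneg h0 hq0.le
          linarith
        refine (pow_le_pow_left₀ h3 h2 _).trans ?_
        rw [← Real.exp_nat_mul]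
        apply Real.exp_le_exp.2
        have : 0 ≤ p * (1 - exp (-lam)) := mul_nonneg h0 (by linarith)
        nlinarith [mul_le_mul_of_nonneg_right h.2 this]
      calc _ = B * (y ^ (eF R).card * p ^ (eF R).card) *
            (1 - p + p * exp (-lam)) ^ (D R i).card := by ring
        _ ≤ _ := by gcongr
    · simp only [Finset.sum_const_zero]
      positivity
  have htot : ∑ R, ∑ i, ∑ G, F G R i
      ≤ Fintype.card ι * (exp (y * p * n.choose 2) * exp (K * log y⁻¹) *
      (exp (lam * a) * exp (- (d * p * (1 - exp (-lam)))))) := by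
    calc ∑ R, ∑ i, ∑ G, F G R i
        ≤ ∑ R : SimpleGraph (Fin n), ∑ _i : ι,
            B * (y * p) ^ (eF R).card * exp (- (d * p * (1 - exp (-lam)))) :=
          Finset.sum_le_sum fun R _ => Finset.sum_le_sum fun i _ => hFG R i
      _ = Fintype.card ι * (B * exp (- (d * p * (1 - exp (-lam)))) *
            (y * p + 1) ^ n.choose 2) := by
          rw [← sum_pow, Finset.mul_sum, Finset.mul_sum]
          refine Finset.sum_congr rfl fun R _ => ?_
          rw [Finset.sum_const, Finset.card_univ, nsmul_eq_mul]
          ring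
      _ ≤ Fintype.card ι * (B * exp (- (d * p * (1 - exp (-lam)))) *
            exp (y * p * n.choose 2)) := by
          have : (y * p + 1) ^ n.choose 2 ≤ exp (y * p * n.choose 2) := by
            rw [mul_comm (y * p), Real.exp_nat_mul]
            exact pow_le_pow_left₀ (by positivity) (Real.add_one_le_exp _) _
          gcongr
      _ = _ := by rw [hB]; ring
  linarith

/-- A duplicate-free list over `Fin n` is determined by its first `n` optional entries. -/
lemma card_nodup (n : ℕ) : Fintype.card {l : List (Fin n) // l.Nodup} ≤ (n + 1) ^ n := by
  have hinj : Function.Injective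
      (fun (l : {l : List (Fin n) // l.Nodup}) (i : Fin n) => l.1[i.1]?) := by
    rintro ⟨l, hl⟩ ⟨l', hl'⟩ h
    have h1 : l.length ≤ n := by simpa using hl.length_le_card
    have h2 : l'.length ≤ n := by simpa using hl'.length_le_card
    apply Subtype.ext
    apply List.ext_getElem?
    intro i
    by_cases hi : i < n
    · exact congrFun h ⟨i, hi⟩
    · rw [List.getElem?_eq_none (show l.length ≤ i by omega),
        List.getElem?_eq_none (show l'.length ≤ i by omega)]
  have := Fintype.card_le_of_injective _ hinj
  simpa using this

/-! ### Pairs with one endpoint in a small set -/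

/-- The pairs `vw` with `v ∈ A` and `w ∈ T v ∖ A`. Removing `A` from the second coordinate makes
every such pair arise from exactly one `(v, w)`. -/
noncomputable def pairs {n : ℕ} (T : Fin n → Set (Fin n)) (A : Finset (Fin n)) :
    Finset (Sym2 (Fin n)) :=
  (A.sigma fun v => (Finset.univ.filter (· ∈ T v)) \ A).image fun x => s(x.1, x.2)

lemma mem_pairs {n : ℕ} {T : Fin n → Set (Fin n)} {A : Finset (Fin n)} {e : Sym2 (Fin n)} :
    e ∈ pairs T A ↔ ∃ v ∈ A, ∃ w ∈ T v, w ∉ A ∧ e = s(v, w) := by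
  simp only [pairs, Finset.mem_image, Finset.mem_sigma, Finset.mem_sdiff, Finset.mem_filter,
    Finset.mem_univ, true_and]
  constructor
  · rintro ⟨⟨v, w⟩, ⟨hv, hw, hw'⟩, rfl⟩
    exact ⟨v, hv, w, hw, hw', rfl⟩
  · rintro ⟨v, hv, w, hw, hw', rfl⟩
    exact ⟨⟨v, w⟩, ⟨hv, hw, hw'⟩, rfl⟩

lemma card_pairs {n : ℕ} (T : Fin n → Set (Fin n)) (A : Finset (Fin n)) (t : ℝ)
    (hT : ∀ v ∈ A, t ≤ (T v).ncard) :
    A.card * (t - A.card) ≤ (pairs T A).card := by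
  rw [pairs, Finset.card_image_of_injOn, Finset.card_sigma, Nat.cast_sum, ← nsmul_eq_mul]
  · apply Finset.card_nsmul_le_sum
    intro v hv
    have h1 : (T v).ncard = (Finset.univ.filter (· ∈ T v)).card := by
      rw [← Set.ncard_coe_finset]; congr 1; ext; simp
    have h2 := Finset.le_card_sdiff A (Finset.univ.filter (· ∈ T v))
    have h3 := hT v hv
    rw [h1] at h3
    have h4 : (((Finset.univ.filter (· ∈ T v)).card : ℕ) : ℝ) ≤
        ((Finset.univ.filter (· ∈ T v)) \ A).card + A.card := by
      have : (Finset.univ.filter (· ∈ T v)).card ≤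
        ((Finset.univ.filter (· ∈ T v)) \ A).card + A.card := by omega
      exact_mod_cast this
    linarith
  · rintro ⟨v, w⟩ h ⟨v', w'⟩ h' he
    simp only [Finset.coe_sigma, Set.mem_sigma_iff, Finset.mem_coe, Finset.mem_sdiff] at h h'
    rcases Sym2.eq_iff.1 he with ⟨h1, h2⟩ | ⟨h1, h2⟩
    · simp only at h1 h2
      subst h1 h2
      rfl
    · simp only at h1 h2
      subst h1 h2
      exact absurd h.1 h'.2.2

lemma card_inter_pairs {n : ℕ} (G H : SimpleGraph (Fin n)) (T : Fin n → Set (Fin n))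
    (A : Finset (Fin n)) (b : ℝ) (hGH : ∀ v ∈ A, ∀ w ∈ T v, G.Adj v w → H.Adj v w)
    (hb : ∀ v ∈ A, (deg H v : ℝ) ≤ b) :
    ((eF G ∩ pairs T A).card : ℝ) ≤ A.card * b := by
  have hsub : eF G ∩ pairs T A ⊆
      (A.sigma fun v => Finset.univ.filter (H.Adj v)).image fun x => s(x.1, x.2) := by
    intro e he
    rw [Finset.mem_inter, mem_eF, mem_pairs] at he
    obtain ⟨he, v, hv, w, hw, -, rfl⟩ := he
    refine Finset.mem_image.2 ⟨⟨v, w⟩, ?_, rfl⟩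
    simp only [Finset.mem_sigma, Finset.mem_filter, Finset.mem_univ, true_and]
    exact ⟨hv, hGH v hv w hw he⟩
  have h1 : (eF G ∩ pairs T A).card ≤ ∑ v ∈ A, deg H v := by
    refine (Finset.card_le_card hsub).trans (Finset.card_image_le.trans ?_)
    rw [Finset.card_sigma]
    refine Finset.sum_le_sum fun v _ => ?_
    rw [deg, ← Set.ncard_coe_finset]
    apply le_of_eq
    congr 1
    ext; simp
  calc ((eF G ∩ pairs T A).card : ℝ) ≤ ((∑ v ∈ A, deg H v : ℕ) : ℝ) := by exact_mod_cast h1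
    _ = ∑ v ∈ A, (deg H v : ℝ) := by push_cast; rfl
    _ ≤ A.card • b := Finset.sum_le_card_nsmul _ _ _ hb
    _ = _ := by rw [nsmul_eq_mul]

/-- In a graph of the Pósa family fewer than `n / 2` vertices have degree exceeding
`(n / 2 + 1 - εn) p`, so any larger set contains vertices of small degree. -/
lemma exists_low_degree {n : ℕ} {p ε : ℝ} (h0 : 0 ≤ p) (hn : 4 ≤ n)
    {H : SimpleGraph (Fin n)} (hH : PosaFamily n p ε H) (S : Set (Fin n)) (m : ℕ)
    (hS : (m : ℝ) + n / 2 ≤ S.ncard) :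
    ∃ A : Finset (Fin n), A.card = m ∧ (∀ v ∈ A, v ∈ S) ∧
      ∀ v ∈ A, (deg H v : ℝ) ≤ (n / 2 + 1) * p - ε * n * p := by
  obtain ⟨v, hv, hmono, hdeg⟩ := hH
  -- `k + 1` is the largest 1-based index below `n / 2`
  set k := (n - 1) / 2 - 1 with hk
  have hkn : k < n := by omega
  have hk1 : 2 * (k + 1) < n := by omega
  have hk2 : n ≤ 2 * (k + 1) + 2 := by omega
  have hk1' : 2 * ((k : ℝ) + 1) < n := by exact_mod_cast hk1
  have hk2' : (n : ℝ) ≤ 2 * ((k : ℝ) + 1) + 2 := by exact_mod_cast hk2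
  let bad : Finset (Fin n) := (Finset.univ.filter (fun i : Fin n => i.1 < k)).image v
  have hbad : bad.card ≤ k := by
    refine Finset.card_image_le.trans ?_
    have : (Finset.univ.filter (fun i : Fin n => i.1 < k)).card ≤ (Finset.range k).card := by
      apply Finset.card_le_card_of_injOn (fun i => i.1)
      · intro i hi
        simpa using hi
      · intro i _ j _ h
        exact Fin.ext h
    simpa using this
  let S' : Finset (Fin n) := Finset.univ.filter (· ∈ S)
  have hS' : S.ncard = S'.card := by
    rw [← Set.ncard_coe_finset]; congr 1; ext; simp [S']
  have hm : m ≤ (S' \ bad).card := by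
    have h1 := Finset.le_card_sdiff bad S'
    have h2 : m + k ≤ S'.card := by
      rw [← hS']
      have : ((m + k : ℕ) : ℝ) ≤ (S.ncard : ℝ) := by push_cast; linarith
      exact_mod_cast this
    omega
  obtain ⟨A, hA, hAm⟩ := Finset.exists_subset_card_eq hm
  refine ⟨A, hAm, fun x hx => ?_, fun x hx => ?_⟩
  · have := (Finset.mem_sdiff.1 (hA hx)).1
    simpa [S'] using this
  · have hxb := (Finset.mem_sdiff.1 (hA hx)).2
    obtain ⟨i, rfl⟩ := hv.2 x
    have hik : k ≤ i.1 := by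
      by_contra h
      exact hxb (Finset.mem_image.2 ⟨i, by simpa using h, rfl⟩)
    have h1 : (deg H (v i) : ℝ) ≤ deg H (v ⟨k, hkn⟩) := by
      exact_mod_cast hmono ⟨k, hkn⟩ i hik
    have h2 := hdeg ⟨k, hkn⟩ (by simp only; linarith)
    simp only at h2
    nlinarith

end

/-! ### Conclusion -/

/-- `S` and `T` witness the second alternative of property `RE(c)` of `R` at the path `P`. -/
def Witness (n : ℕ) (c : ℝ) (R : SimpleGraph (Fin n)) (P : List (Fin n))
    (ST : Set (Fin n) × (Fin n → Set (Fin n))) : Prop :=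
  c * n ≤ ST.1.ncard ∧ (∀ v ∈ ST.1, c * n ≤ (ST.2 v).ncard) ∧
    ∀ v ∈ ST.1, ∀ w ∈ ST.2 v, ∃ Q : List (Fin n),
      IsPathOn (R ⊔ listGraph P) Q ∧ Q.head? = some v ∧ Q.getLast? = some w ∧
      Q.toFinset = P.toFinset

open Classical in
/-- A choice of witness depending on `R` and `P` only, wherever one exists; the union bound
requires that it not depend on the random graph. -/
noncomputable def chosen (n : ℕ) (c : ℝ) (R : SimpleGraph (Fin n)) (P : List (Fin n)) :
    Set (Fin n) × (Fin n → Set (Fin n)) :=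
  if h : ∃ ST, Witness n c R P ST then h.choose else (∅, fun _ => ∅)

lemma chosen_spec {n : ℕ} {c : ℝ} {R : SimpleGraph (Fin n)} {P : List (Fin n)}
    (h : ∃ ST, Witness n c R P ST) : Witness n c R P (chosen n c R P) := by
  rw [chosen, dif_pos h]
  exact h.choose_spec

/-- A failure of the conclusion for `G` yields a small `R ⊆ G`, a path and a set `A` of `m`
vertices such that `G` has few edges among the associated pairs, none of which lies in `R`. -/
lemma failure {n m : ℕ} {p ε δ : ℝ} (h0 : 0 ≤ p) (hε : 0 < ε) (hn : 4 ≤ n)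
    (hm : (m : ℝ) ≤ ε * n / 8) (G : SimpleGraph (Fin n))
    (hG : ¬ ∀ H : SimpleGraph (Fin n), H ≤ G → PosaFamily n p ε H →
            ∀ R : SimpleGraph (Fin n), R ≤ G → RE n (1/2 + ε/4) R →
              (R.edgeSet.ncard : ℝ) ≤ δ * n^2 * p →
              Complements n (1/2 + ε/4) R (G \ H)) :
    ∃ R, R ≤ G ∧ ((eF R).card : ℝ) ≤ δ * n^2 * p ∧
      ∃ i : {l : List (Fin n) // l.Nodup} × Finset (Fin n),
        pairs (chosen n (1/2 + ε/4) R i.1.1).2 i.2 ⊆ allE n \ eF R ∧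
        m * ((1/2 + ε/8) * n) ≤ (pairs (chosen n (1/2 + ε/4) R i.1.1).2 i.2).card ∧
        ((eF G ∩ pairs (chosen n (1/2 + ε/4) R i.1.1).2 i.2).card : ℝ)
          ≤ m * ((n / 2 + 1) * p - ε * n * p) := by
  simp only [not_forall] at hG
  obtain ⟨H, hHG, hH, R, hRG, hRE, hRK, hC⟩ := hG
  rw [ncard_edgeSet] at hRK
  simp only [Complements, not_forall, not_or] at hC
  obtain ⟨P, hP0, hP, hlong, hC⟩ := hC
  refine ⟨R, hRG, hRK, ?_⟩
  have hex : ∃ ST, Witness n (1/2 + ε/4) R P ST := by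
    rcases hRE.2 P hP0 hP with h | ⟨S, hS, T, hT, hQ⟩
    · exact absurd h hlong
    · exact ⟨(S, T), hS, hT, hQ⟩
  have hW := chosen_spec hex
  set S := (chosen n (1/2 + ε/4) R P).1 with hSdef
  set T := (chosen n (1/2 + ε/4) R P).2 with hTdef
  obtain ⟨hS, hT, hQ⟩ := hW
  rw [← hSdef] at hS hT hQ
  rw [← hTdef] at hT hQ
  have hno : ∀ v ∈ S, ∀ w ∈ T v, ¬ (R ⊔ G \ H).Adj v w := by
    intro v hv w hw hadj
    exact hC ⟨S, hS, T, hT, hQ, v, hv, w, hw, hadj⟩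
  obtain ⟨A, hAm, hAS, hAdeg⟩ := exists_low_degree h0 hn hH S m (by
    have : (0 : ℝ) ≤ ε * n := by positivity
    linarith)
  refine ⟨(⟨P, hP⟩, A), ?_, ?_, ?_⟩
  · intro e he
    obtain ⟨v, hv, w, hw, hwA, rfl⟩ := mem_pairs.1 he
    refine Finset.mem_sdiff.2 ⟨?_, fun h => ?_⟩
    · simp only [allE, Finset.mem_filter, Finset.mem_univ, true_and, Sym2.mk_isDiag_iff]
      rintro rfl
      exact hwA hv
    · exact hno v (hAS v hv) w hw (Or.inl (mem_eF.1 h))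
  · have := card_pairs T A ((1/2 + ε/4) * n) (fun v hv => hT v (hAS v hv))
    rw [hAm] at this
    refine le_trans ?_ this
    gcongr
    linarith
  · have := card_inter_pairs G H T A _ (fun v hv w hw hadj => by
      by_contra hnH
      exact hno v (hAS v hv) w hw (Or.inr ⟨hadj, hnH⟩)) hAdeg
    rwa [hAm] at this

/-- The exponent of the Chernoff bound, for the parameter `ε`. -/
lemma chernoff_exponent {ε n p m : ℝ} (hε : 0 < ε) (hε1 : ε < 1) (hn : 8 ≤ ε * n) (hn0 : 0 < n)
    (h0 : 0 ≤ p) (hm : ε * n / 16 ≤ m) :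
    ε * (m * ((n / 2 + 1) * p - ε * n * p)) - m * ((1/2 + ε/8) * n) * p * (1 - exp (-ε))
      ≤ - (ε ^ 3 / 32 * (n ^ 2 * p)) := by
  have hexp : ε - ε ^ 2 / 2 ≤ 1 - exp (-ε) := by
    have h1 := Real.quadratic_le_exp_of_nonneg hε.le
    have h2 : exp (-ε) * exp ε = 1 := by rw [← Real.exp_add]; simp
    have h3 : exp (-ε) * (1 + ε + ε ^ 2 / 2) ≤ 1 :=
      (mul_le_mul_of_nonneg_left h1 (exp_pos _).le).trans h2.le
    have h4 : 0 < 1 + ε + ε ^ 2 / 2 := by positivity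
    by_contra! h
    nlinarith [mul_lt_mul_of_pos_right h h4, pow_pos hε 4]
  have hm0 : 0 ≤ m := le_trans (by positivity) hm
  have hd : 0 ≤ m * ((1/2 + ε/8) * n) * p := by positivity
  have hbr : ε * (n / 2 + 1 - ε * n) - (1/2 + ε/8) * n * (ε - ε ^ 2 / 2)
      ≤ - (ε ^ 2 / 2 * n) := by
    have : ε * (n / 2 + 1 - ε * n) - (1/2 + ε/8) * n * (ε - ε ^ 2 / 2) + ε ^ 2 / 2 * n
        = ε * (1 - ε * n * (3/8 - ε / 16)) := by ring
    have h2 : 0 ≤ ε * n * (5/16 - (3/8 - ε / 16)) + ε * n * (1/16) := by nlinarith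
    have h3 : 1 - ε * n * (3/8 - ε / 16) ≤ 0 := by nlinarith
    nlinarith [mul_nonneg hε.le (neg_nonneg.2 h3)]
  calc _ ≤ ε * (m * ((n / 2 + 1) * p - ε * n * p))
        - m * ((1/2 + ε/8) * n) * p * (ε - ε ^ 2 / 2) := by
        linarith [mul_le_mul_of_nonneg_left hexp hd]
    _ = (m * p) * (ε * (n / 2 + 1 - ε * n) - (1/2 + ε/8) * n * (ε - ε ^ 2 / 2)) := by ring
    _ ≤ (m * p) * (- (ε ^ 2 / 2 * n)) := by gcongr
    _ = - (m * (p * (ε ^ 2 / 2 * n))) := by ring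
    _ ≤ - (ε * n / 16 * (p * (ε ^ 2 / 2 * n))) := by gcongr
    _ = _ := by ring

lemma card_index_le {n : ℕ} (hn : 2 ≤ n) :
    (Fintype.card ({l : List (Fin n) // l.Nodup} × Finset (Fin n)) : ℝ)
      ≤ exp (3 * (n * log n)) := by
  have hn' : (2 : ℝ) ≤ n := by exact_mod_cast hn
  have hn0 : (0 : ℝ) < n := by linarith
  rw [Fintype.card_prod, Fintype.card_finset, Fintype.card_fin]
  have h1 : ((Fintype.card {l : List (Fin n) // l.Nodup} : ℕ) : ℝ) ≤ ((n : ℝ) ^ 2) ^ n := by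
    calc ((Fintype.card {l : List (Fin n) // l.Nodup} : ℕ) : ℝ) ≤ (((n + 1) ^ n : ℕ) : ℝ) := by
          exact_mod_cast card_nodup n
      _ = ((n : ℝ) + 1) ^ n := by push_cast; rfl
      _ ≤ _ := pow_le_pow_left₀ (by linarith) (by nlinarith) _
  have h2 : exp (3 * (n * log n)) = ((n : ℝ) ^ 2) ^ n * (n : ℝ) ^ n := by
    rw [show 3 * ((n : ℝ) * log n) = n * (log n + log n + log n) by ring, Real.exp_nat_mul,
      Real.exp_add, Real.exp_add, Real.exp_log hn0, ← mul_pow]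
    ring
  rw [h2]
  push_cast
  gcongr

/-- Lemma 4.8.  For every `0 < ε < 1` there exist `C, δ > 0` such
that, for `p ≥ C log n / n`, a.a.s. for every `H ∈ H^ε_{n,p}(G)`, the graph `G ∖ H`
complements every graph `R ⊆ G` satisfying `RE(1/2 + ε/4)` with at most `δn²p` edges. -/
theorem resilient_complements (ε : ℝ) (hε : 0 < ε) (hε1 : ε < 1) :
    ∃ C δ : ℝ, 0 < C ∧ 0 < δ ∧ ∀ η : ℝ, 0 < η → ∃ N : ℕ, ∀ n : ℕ, N ≤ n →
      ∀ p : ℝ, C * Real.log n / n ≤ p → p ≤ 1 →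
        1 - η ≤ Pr n p (fun G =>
          ∀ H : SimpleGraph (Fin n), H ≤ G → PosaFamily n p ε H →
            ∀ R : SimpleGraph (Fin n), R ≤ G → RE n (1/2 + ε/4) R →
              (R.edgeSet.ncard : ℝ) ≤ δ * n^2 * p →
              Complements n (1/2 + ε/4) R (G \ H)) := by
  refine ⟨384 / ε ^ 3, (ε ^ 3 / 256) ^ 2, by positivity, by positivity, fun η hη => ?_⟩
  obtain ⟨N, hN⟩ := exists_nat_gt (16 / ε + 4 + |log η|)
  refine ⟨N, fun n hNn p hp hp1 => ?_⟩
  have hnN : (N : ℝ) ≤ n := by exact_mod_cast hNn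
  have habs := abs_nonneg (log η)
  have hεi : 0 < 16 / ε := by positivity
  have hn4 : (4 : ℝ) ≤ n := by linarith
  have hn4' : 4 ≤ n := by exact_mod_cast hn4
  have hn0 : (0 : ℝ) < n := by linarith
  have hεn : 16 ≤ ε * n := by
    have : 16 / ε ≤ n := by linarith
    rw [div_le_iff₀ hε] at this
    linarith
  have hlog1 : 1 ≤ log n := by
    rw [Real.le_log_iff_exp_le hn0]
    have := Real.exp_one_lt_d9
    linarith
  have h0 : 0 ≤ p := le_trans (by positivity) hp
  -- `n log n` is a small multiple of `n² p`
  have hnp : 384 * (n * log n) ≤ ε ^ 3 * (n ^ 2 * p) := by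
    have h := hp
    rw [div_mul_eq_mul_div, div_div, div_le_iff₀ (by positivity)] at h
    nlinarith [mul_le_mul_of_nonneg_left h hn0.le]
  set m := ⌈ε * n / 16⌉₊ with hmdef
  have hm1 : ε * n / 16 ≤ m := Nat.le_ceil _
  have hm2 : (m : ℝ) ≤ ε * n / 8 := by
    have := Nat.ceil_lt_add_one (a := ε * n / 16) (by positivity)
    linarith
  set y : ℝ := ε ^ 3 / 256 with hy
  have hy0 : 0 < y := by positivity
  have hy1 : y ≤ 1 := by
    have : ε ^ 3 ≤ 1 := pow_le_one₀ hε.le hε1.le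
    rw [hy]; linarith
  have hub := union_bound (ι := {l : List (Fin n) // l.Nodup} × Finset (Fin n)) n p y ε
    (m * ((n / 2 + 1) * p - ε * n * p)) (m * ((1/2 + ε/8) * n)) (y ^ 2 * n ^ 2 * p)
    h0 hp1 hy0 hy1 hε.le _ (fun R i => pairs (chosen n (1/2 + ε/4) R i.1.1).2 i.2)
    (fun G hG => failure (δ := y ^ 2) h0 hε hn4' hm2 G hG)
  refine le_trans ?_ hub
  have hcard := card_index_le (n := n) (by omega)
  have hch := chernoff_exponent hε hε1 (by linarith : 8 ≤ ε * n) hn0 h0 hm1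
  have hchoose : (n.choose 2 : ℝ) ≤ n ^ 2 := by
    exact_mod_cast Nat.choose_le_pow n 2
  have hA : y * p * n.choose 2 ≤ y * (n ^ 2 * p) := by
    nlinarith [mul_le_mul_of_nonneg_left hchoose (mul_nonneg hy0.le h0)]
  have hB : y ^ 2 * n ^ 2 * p * log y⁻¹ ≤ y * (n ^ 2 * p) := by
    have h1 : log y⁻¹ ≤ y⁻¹ := (Real.log_le_sub_one_of_pos (by positivity)).trans (by linarith)
    calc y ^ 2 * n ^ 2 * p * log y⁻¹ ≤ y ^ 2 * n ^ 2 * p * y⁻¹ := by gcongr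
      _ = _ := by field_simp
  have hfin : (Fintype.card ({l : List (Fin n) // l.Nodup} × Finset (Fin n)) : ℝ) *
      (exp (y * p * n.choose 2) * exp (y ^ 2 * n ^ 2 * p * log y⁻¹) *
      (exp (ε * (m * ((n / 2 + 1) * p - ε * n * p))) *
        exp (- (m * ((1/2 + ε/8) * n) * p * (1 - exp (-ε)))))) ≤ η := by
    refine (mul_le_mul_of_nonneg_right hcard (by positivity)).trans ?_
    rw [← Real.exp_add, ← Real.exp_add, ← Real.exp_add, ← Real.exp_add,
      ← Real.le_log_iff_exp_le hη]
    have h1 : (n : ℝ) ≤ n * log n := by nlinarith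
    have h2 : -(n : ℝ) ≤ log η := by
      have := neg_abs_le (log η)
      linarith
    have h3 : y * (n ^ 2 * p) = ε ^ 3 * (n ^ 2 * p) / 256 := by rw [hy]; ring
    linarith
  linarith

end Resilience
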